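/- Let λ be a Borel probability measure on [0,1] and let 𝒫 = {P_n}_{n∈ℕ} be a sequence of partitions. If 𝒫 is log-balanced in measure (or a.e.) with respect to λ, then ‖P_n‖_λ := sup_{I ∈ P_n} λ(I) → 0 as n → ∞. -/

import Mathlib

open MeasureTheory Filter Set Asymptotics

noncomputable section

/-- A topological partition of `[0,1]`: an (automatically at most countable) collection of
pairwise disjoint nonempty open subintervals of `[0,1]` whose closures cover `[0,1]`. -/
def IsTopPartition (P : Set (Set ℝ)) : Prop :=
  P.Countable ∧
  (∀ I ∈ P, ∃ a b : ℝ, a < b ∧ 0 ≤ a ∧ b ≤ 1 ∧ I = Set.Ioo a b) ∧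
  P.PairwiseDisjoint id ∧
  (⋃ I ∈ P, closure I) = Set.Icc (0 : ℝ) 1

/-- The set `E^Ps` of endpoints of the intervals of the partitions of the sequence `Ps`:
the points of `[0,1]` not covered by the open intervals of some partition. -/
def endpointSet (Ps : ℕ → Set (Set ℝ)) : Set ℝ :=
  ⋃ n, (Set.Icc (0 : ℝ) 1 \ ⋃₀ Ps n)

/-- `I_n^Ps(x)`: the unique interval of the partition `P` containing `x`
(the empty set if there is none). -/
def cell (P : Set (Set ℝ)) (x : ℝ) : Set ℝ :=
  ⋃₀ {I | I ∈ P ∧ x ∈ I}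

/-- A sequence of partitions is self-refining if every interval at depth `n+1` is contained
in an interval at depth `n`. -/
def SelfRefining (Ps : ℕ → Set (Set ℝ)) : Prop :=
  ∀ n, ∀ I ∈ Ps (n + 1), ∃ J ∈ Ps n, I ⊆ J

/-- Strictly self-refining: self-refining with `P_{n+1} ≠ P_n` for all `n`. -/
def StrictSelfRefining (Ps : ℕ → Set (Set ℝ)) : Prop :=
  SelfRefining Ps ∧ ∀ n, Ps (n + 1) ≠ Ps n

/-- `Ps` is log-balanced a.e. with respect to `lam` with weight function `f`. -/
def LogBalancedAE (lam : Measure ℝ) (Ps : ℕ → Set (Set ℝ)) (f : ℕ → ℝ) : Prop :=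
  lam (endpointSet Ps) = 0 ∧ Tendsto f atTop atTop ∧
    ∀ᵐ x ∂lam,
      Tendsto (fun n => -Real.log ((lam (cell (Ps n) x)).toReal) / f n) atTop (nhds 1)

/-- `Ps` is log-balanced in measure with respect to `lam` with weight function `f`. -/
def LogBalancedInMeasure (lam : Measure ℝ) (Ps : ℕ → Set (Set ℝ)) (f : ℕ → ℝ) : Prop :=
  lam (endpointSet Ps) = 0 ∧ Tendsto f atTop atTop ∧
    TendstoInMeasure lam
      (fun n x => -Real.log ((lam (cell (Ps n) x)).toReal) / f n) atTop (fun _ => 1)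

/-- The Lochs index `L_n(x, Ps¹, Ps²)`. -/
def lochsIndex (P1 P2 : ℕ → Set (Set ℝ)) (n : ℕ) (x : ℝ) : ℕ :=
  sSup {ℓ : ℕ | cell (P1 n) x ⊆ cell (P2 ℓ) x}

/-- The generalized inverse `f^{[-1]}(y) = min {n : f n ≥ y}` of a weight function. -/
def weightInv (f : ℕ → ℝ) (y : ℝ) : ℕ := sInf {n : ℕ | y ≤ f n}

theorem cell_eq_aux {P : Set (Set ℝ)} (hP : IsTopPartition P) {I : Set ℝ} (hI : I ∈ P)
    {x : ℝ} (hx : x ∈ I) : cell P x = I := by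
  have : {J | J ∈ P ∧ x ∈ J} = {I} := by
    ext J
    simp only [Set.mem_setOf_eq, Set.mem_singleton_iff]
    constructor
    · rintro ⟨hJ, hxJ⟩
      by_contra hne
      exact Set.disjoint_left.1 (hP.2.2.1 hJ hI hne) hxJ hx
    · rintro rfl
      exact ⟨hI, hx⟩
  rw [cell, this, Set.sUnion_singleton]

theorem measurable_cell_aux (lam : Measure ℝ) {P : Set (Set ℝ)} (hP : IsTopPartition P) :
    Measurable (fun x => lam (cell P x)) := by
  have h : (fun x => lam (cell P x)) =
      fun x => ⨆ I ∈ P, I.indicator (fun _ => lam I) x := by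
    funext x
    apply le_antisymm
    · by_cases hx : ∃ I ∈ P, x ∈ I
      · obtain ⟨I, hI, hxI⟩ := hx
        rw [cell_eq_aux hP hI hxI]
        refine le_trans ?_ (le_iSup₂ (f := fun I (_ : I ∈ P) => I.indicator (fun _ => lam I) x) I hI)
        simp [hxI]
      · have : {J | J ∈ P ∧ x ∈ J} = ∅ := by
          ext J
          simp only [Set.mem_setOf_eq, Set.mem_empty_iff_false, iff_false]
          exact fun hJ => hx ⟨J, hJ.1, hJ.2⟩
        simp [cell, this]
    · refine iSup₂_le fun I hI => ?_
      by_cases hxI : x ∈ I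
      · rw [cell_eq_aux hP hI hxI]
        simp [hxI]
      · simp [hxI]
  rw [h]
  refine Measurable.biSup P hP.1 fun I hI => ?_
  obtain ⟨a, b, -, -, -, hab⟩ := hP.2.1 I hI
  refine measurable_const.indicator ?_
  rw [hab]
  exact measurableSet_Ioo

/-- Proposition: the norm `‖P_n‖_λ = sup_{I ∈ P_n} λ(I)` of a log-balanced sequence of
partitions tends to `0`. -/
theorem norm_tendsto_zero (lam : Measure ℝ) [IsProbabilityMeasure lam]
    (hlam : lam (Set.Icc (0 : ℝ) 1)ᶜ = 0)
    (Ps : ℕ → Set (Set ℝ)) (hPs : ∀ n, IsTopPartition (Ps n))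
    (hb : (∃ f, LogBalancedInMeasure lam Ps f) ∨ (∃ f, LogBalancedAE lam Ps f)) :
    Tendsto (fun n => ⨆ I ∈ Ps n, lam I) atTop (nhds (0 : ENNReal)) := by
  have hm : ∃ f, LogBalancedInMeasure lam Ps f := by
    rcases hb with h | ⟨f, h0, hf, hae⟩
    · exact h
    · refine ⟨f, h0, hf, tendstoInMeasure_of_tendsto_ae (fun n => ?_) hae⟩
      have := measurable_cell_aux lam (hPs n)
      exact (((Real.measurable_log.comp this.ennreal_toReal).neg).div_const (f n)).aestronglyMeasurable
  obtain ⟨f, -, hf, ht⟩ := hm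
  rw [ENNReal.tendsto_nhds_zero]
  intro ε hε
  obtain ⟨δ, hδ0, hδε⟩ : ∃ δ : NNReal, 0 < δ ∧ (δ : ENNReal) < ε := by
    obtain ⟨δ, h1, h2⟩ := ENNReal.lt_iff_exists_nnreal_btwn.1 hε
    exact ⟨δ, by exact_mod_cast h1, h2⟩
  have hbad := (ENNReal.tendsto_nhds_zero.1 (ht (ENNReal.ofReal (1/2)) (by simp))) δ
    (by exact_mod_cast hδ0)
  filter_upwards [hbad, hf.eventually_gt_atTop 0,
    hf.eventually_gt_atTop (2 * -Real.log δ)] with n hn hf0 hfn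
  refine iSup₂_le fun I hI => ?_
  refine le_trans ?_ hδε.le
  by_contra hlt
  push Not at hlt
  apply absurd hn
  push Not
  refine lt_of_lt_of_le hlt (measure_mono fun x hx => ?_)
  have hδI : (δ : ℝ) < (lam I).toReal := by
    have := (ENNReal.toReal_lt_toReal ENNReal.coe_ne_top (measure_ne_top lam I)).2 hlt
    simpa using this
  have hlog : Real.log δ < Real.log (lam I).toReal :=
    Real.log_lt_log (by exact_mod_cast hδ0) hδI
  have hg : -Real.log (lam I).toReal / f n ≤ 1/2 := by
    rw [div_le_iff₀ hf0]
    linarith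
  simp only [Set.mem_setOf_eq]
  rw [cell_eq_aux (hPs n) hI hx, edist_dist]
  apply ENNReal.ofReal_le_ofReal
  rw [Real.dist_eq, abs_sub_comm]
  exact le_trans (by linarith) (le_abs_self _)
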